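/- arXiv:1111.3778 — 7 statements merged into one kernel-verified Lean document; each statement's English description precedes it below -/
import Mathlib

section
/- Let a, b, c be integers with c ≠ 0 and b ≠ 0, and let α = (a + b√3)/c, ᾱ = (a − b√3)/c. If α is ambiguous, i.e., α·ᾱ < 0, then exactly one of C(α) and C²(α) is ambiguous and the other is totally negative. Precisely: either C(α)·C(ᾱ) < 0 and both C²(α) < 0 and C²(ᾱ) < 0, or C²(α)·C²(ᾱ) < 0 and both C(α) < 0 and C(ᾱ) < 0, and these two alternatives are mutually exclusive. -/
theorem aux_ne (a b c : ℤ) (hc : c ≠ 0) (hb : b ≠ 0) :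
    1 + ((a : ℝ) + (b : ℝ) * Real.sqrt 3) / (c : ℝ) ≠ 0 := by
  intro h
  have hc' : (c : ℝ) ≠ 0 := by exact_mod_cast hc
  have hb' : (b : ℝ) ≠ 0 := by exact_mod_cast hb
  have hi : Irrational (Real.sqrt 3) := by
    have := Nat.Prime.irrational_sqrt Nat.prime_three
    exact_mod_cast this
  apply hi
  refine ⟨(-(c : ℚ) - a) / b, ?_⟩
  push_cast
  field_simp at h ⊢
  linarith

theorem aux_pos (x y : ℝ) (hx : 0 < x) (hy : y < 0) (h : 1 + y ≠ 0) :
    Xor'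
      ((-(1 + x) / x) * (-(1 + y) / y) < 0 ∧ -1 / (1 + x) < 0 ∧ -1 / (1 + y) < 0)
      ((-1 / (1 + x)) * (-1 / (1 + y)) < 0 ∧ -(1 + x) / x < 0 ∧ -(1 + y) / y < 0) := by
  have h1 : -(1 + x) / x < 0 := div_neg_of_neg_of_pos (by linarith) hx
  have h2 : -1 / (1 + x) < 0 := div_neg_of_neg_of_pos (by linarith) (by linarith)
  rcases lt_or_gt_of_ne h with h | h
  · have h3 : -(1 + y) / y < 0 := div_neg_of_pos_of_neg (by linarith) hy
    have h4 : 0 < -1 / (1 + y) := div_pos_of_neg_of_neg (by linarith) h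
    exact Or.inr ⟨⟨mul_neg_of_neg_of_pos h2 h4, h1, h3⟩, fun k => absurd k.2.2 h4.not_gt⟩
  · have h3 : 0 < -(1 + y) / y := div_pos_of_neg_of_neg (by linarith) hy
    have h4 : -1 / (1 + y) < 0 := div_neg_of_neg_of_pos (by linarith) h
    exact Or.inl ⟨⟨mul_neg_of_neg_of_pos h1 h3, h2, h4⟩, fun k => absurd k.2.2 h3.not_gt⟩

/-- If `α = (a + b√3)/c` is ambiguous (`α·ᾱ < 0`), then exactly
one of `C(α)` and `C²(α)` is ambiguous and the other is totally negative,
where `C(z) = -(1+z)/z`, `C²(z) = -1/(1+z)`, the conjugate of `C(α)` is `C(ᾱ)`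
and the conjugate of `C²(α)` is `C²(ᾱ)`. -/
theorem C_C2_ambiguous (a b c : ℤ) (hc : c ≠ 0) (hb : b ≠ 0)
    (α αbar : ℝ)
    (hα : α = ((a : ℝ) + (b : ℝ) * Real.sqrt 3) / (c : ℝ))
    (hαbar : αbar = ((a : ℝ) - (b : ℝ) * Real.sqrt 3) / (c : ℝ))
    (hamb : α * αbar < 0) :
    Xor'
      ((-(1 + α) / α) * (-(1 + αbar) / αbar) < 0 ∧
        -1 / (1 + α) < 0 ∧ -1 / (1 + αbar) < 0)
      ((-1 / (1 + α)) * (-1 / (1 + αbar)) < 0 ∧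
        -(1 + α) / α < 0 ∧ -(1 + αbar) / αbar < 0) := by
  have n1 : 1 + α ≠ 0 := hα ▸ aux_ne a b c hc hb
  have n2 : 1 + αbar ≠ 0 := by
    have := aux_ne a (-b) c hc (neg_ne_zero.mpr hb)
    rw [hαbar]
    push_cast at this
    rwa [neg_mul, ← sub_eq_add_neg] at this
  rcases mul_neg_iff.mp hamb with ⟨h1, h2⟩ | ⟨h1, h2⟩
  · exact aux_pos α αbar h1 h2 n2
  · have := aux_pos αbar α h2 h1 n1
    rw [mul_comm (-(1 + α) / α), mul_comm (-1 / (1 + α)),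
      and_comm (a := -1 / (1 + α) < 0), and_comm (a := -(1 + α) / α < 0)]
    exact this
end

section
/- Let a, b, c be integers with c ≠ 0 and b ≠ 0 such that c divides a² − 3b², and set d = (a² − 3b²)/c (note d ≠ 0 since √3 is irrational and b ≠ 0). Let α = (a + b√3)/c. Then C(α) = (−(a + d) + b√3)/d, and the d-parameter of C(α) is again an integer: d divides (a + d)² − 3b², with ((a + d)² − 3b²)/d = 2a + c + d. Moreover C²(α) = (−(a + c) + b√3)/(2a + c + d), and (2a + c + d) divides (a + c)² − 3b², with ((a + c)² − 3b²)/(2a + c + d) = c. -/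
/-- If `c ∣ a² - 3b²` and `d = (a² - 3b²)/c`, then `d ≠ 0`,
`C(α) = (-(a+d) + b√3)/d` with integer d-parameter `((a+d)² - 3b²)/d = 2a+c+d`,
and `C²(α) = (-(a+c) + b√3)/(2a+c+d)` with integer d-parameter
`((a+c)² - 3b²)/(2a+c+d) = c`, where `α = (a + b√3)/c`, `C(z) = -(1+z)/z`,
`C²(z) = -1/(1+z)`. -/
theorem C_d_parameter (a b c : ℤ) (hc : c ≠ 0) (hb : b ≠ 0)
    (hdvd : c ∣ a ^ 2 - 3 * b ^ 2) (d : ℤ) (hd : d = (a ^ 2 - 3 * b ^ 2) / c)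
    (α : ℝ) (hα : α = ((a : ℝ) + (b : ℝ) * Real.sqrt 3) / (c : ℝ)) :
    d ≠ 0 ∧
    (-(1 + α) / α = ((-(a + d) : ℤ) + (b : ℝ) * Real.sqrt 3) / (d : ℝ) ∧
      d ∣ (a + d) ^ 2 - 3 * b ^ 2 ∧
      ((a + d) ^ 2 - 3 * b ^ 2) / d = 2 * a + c + d) ∧
    (-1 / (1 + α) =
        ((-(a + c) : ℤ) + (b : ℝ) * Real.sqrt 3) / ((2 * a + c + d : ℤ) : ℝ) ∧
      (2 * a + c + d) ∣ (a + c) ^ 2 - 3 * b ^ 2 ∧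
      ((a + c) ^ 2 - 3 * b ^ 2) / (2 * a + c + d) = c) := by
  have hirr : Irrational (Real.sqrt 3) := by
    simpa using Nat.prime_three.irrational_sqrt
  have hs : Real.sqrt 3 * Real.sqrt 3 = 3 := Real.mul_self_sqrt (by norm_num)
  have key : ∀ x : ℤ, (x : ℝ) + b * Real.sqrt 3 ≠ 0 := by
    intro x hx
    have hb' : (b : ℝ) ≠ 0 := by exact_mod_cast hb
    apply hirr
    refine ⟨-(x : ℚ) / b, ?_⟩
    push_cast
    rw [div_eq_iff hb']
    linarith
  have keyint : ∀ x : ℤ, x ^ 2 - 3 * b ^ 2 ≠ 0 := by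
    intro x hx
    have hx' : (x : ℝ) ^ 2 - 3 * (b : ℝ) ^ 2 = 0 := by exact_mod_cast hx
    have h0 : ((x : ℝ) + b * Real.sqrt 3) * (((-x : ℤ) : ℝ) + b * Real.sqrt 3) = 0 := by
      push_cast
      linear_combination (b : ℝ) ^ 2 * hs - hx'
    rcases mul_eq_zero.mp h0 with h | h
    · exact key _ h
    · exact key _ h
  have hcd : c * d = a ^ 2 - 3 * b ^ 2 := by
    rw [hd]; exact Int.mul_ediv_cancel' hdvd
  have hd0 : d ≠ 0 := by
    rintro h
    exact keyint a (by rw [← hcd, h, mul_zero])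
  have e1 : (a + d) ^ 2 - 3 * b ^ 2 = d * (2 * a + c + d) := by linear_combination -hcd
  have e2 : (a + c) ^ 2 - 3 * b ^ 2 = (2 * a + c + d) * c := by linear_combination -hcd
  have he0 : 2 * a + c + d ≠ 0 := by
    intro h
    exact keyint (a + c) (by rw [e2, h, zero_mul])
  have hcdR : (c : ℝ) * d = a ^ 2 - 3 * b ^ 2 := by exact_mod_cast hcd
  have hcR : (c : ℝ) ≠ 0 := by exact_mod_cast hc
  have hdR : (d : ℝ) ≠ 0 := by exact_mod_cast hd0
  have heR : ((2 * a + c + d : ℤ) : ℝ) ≠ 0 := by exact_mod_cast he0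
  have ka := key a
  have kac := key (a + c)
  have hca : (c : ℝ) * α = a + b * Real.sqrt 3 := by
    rw [hα]; field_simp
  have hα0 : α ≠ 0 := by
    rintro h
    rw [h, mul_zero] at hca
    exact ka hca.symm
  have hα1 : 1 + α ≠ 0 := by
    intro h
    apply kac
    push_cast
    linear_combination (c : ℝ) * h - hca
  refine ⟨hd0, ⟨?_, ⟨_, e1⟩, ?_⟩, ?_, ⟨_, e2⟩, ?_⟩
  · rw [div_eq_div_iff hα0 hdR]
    apply mul_left_cancel₀ hcR
    push_cast
    linear_combination (-(d : ℝ) + (a + d) - b * Real.sqrt 3) * hca - hcdR - (b : ℝ) ^ 2 * hs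
  · rw [e1, Int.mul_ediv_cancel_left _ hd0]
  · rw [div_eq_div_iff hα1 heR]
    apply mul_left_cancel₀ hcR
    push_cast
    linear_combination ((a + c : ℝ) - b * Real.sqrt 3) * hca - hcdR - (b : ℝ) ^ 2 * hs
  · rw [e2, Int.mul_ediv_cancel_left _ he0]
end

section
/- Let k be a nonzero integer and let p, q, r, s be integers with p·s − q·r = 1. Then r·k√3 + s ≠ 0, and setting y = (p·k√3 + q)/(r·k√3 + s), a = q·s − 3p·r·k², c = s² − 3r²k², and d = q² − 3p²k², one has c ≠ 0, y = (a + k√3)/c, and a² − 3k² = c·d; in particular c divides a² − 3k², and if moreover y·((a − k√3)/c) < 0 (i.e., y is ambiguous) then a² < 3k². Hence every ambiguous number of the form (a + k√3)/c lying in the orbit of k√3 under the real fractional linear transformations with determinant 1 satisfies a² < 3k² and c ∣ a² − 3k². -/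
/-- For a nonzero integer `k` and integers `p, q, r, s` with
`ps - qr = 1`, one has `r·k√3 + s ≠ 0`, and with
`y = (p·k√3 + q)/(r·k√3 + s)`, `a = qs - 3prk²`, `c = s² - 3r²k²`,
`d = q² - 3p²k²`: `c ≠ 0`, `y = (a + k√3)/c`, `a² - 3k² = c·d` (so
`c ∣ a² - 3k²`), and if `y·((a - k√3)/c) < 0` then `a² < 3k²`. -/
theorem orbit_ambiguous (k : ℤ) (hk : k ≠ 0) (p q r s : ℤ)
    (hdet : p * s - q * r = 1) (a c d : ℤ)
    (ha : a = q * s - 3 * p * r * k ^ 2)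
    (hc : c = s ^ 2 - 3 * r ^ 2 * k ^ 2)
    (hd : d = q ^ 2 - 3 * p ^ 2 * k ^ 2) :
    ((r : ℝ) * ((k : ℝ) * Real.sqrt 3) + (s : ℝ) ≠ 0) ∧
    c ≠ 0 ∧
    ((p : ℝ) * ((k : ℝ) * Real.sqrt 3) + (q : ℝ)) /
        ((r : ℝ) * ((k : ℝ) * Real.sqrt 3) + (s : ℝ)) =
      ((a : ℝ) + (k : ℝ) * Real.sqrt 3) / (c : ℝ) ∧
    a ^ 2 - 3 * k ^ 2 = c * d ∧ c ∣ a ^ 2 - 3 * k ^ 2 ∧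
    ((((a : ℝ) + (k : ℝ) * Real.sqrt 3) / (c : ℝ)) *
        (((a : ℝ) - (k : ℝ) * Real.sqrt 3) / (c : ℝ)) < 0 →
      a ^ 2 < 3 * k ^ 2) := by
  have h3 : Real.sqrt 3 ^ 2 = 3 := Real.sq_sqrt (by norm_num)
  have hirr : Irrational (Real.sqrt 3) := by
    simpa using Nat.prime_three.irrational_sqrt
  have hdetR : (p : ℝ) * s - q * r = 1 := by exact_mod_cast hdet
  have haR : (a : ℝ) = q * s - 3 * p * r * k ^ 2 := by rw [ha]; push_cast; ring
  have hcR : (c : ℝ) = s ^ 2 - 3 * r ^ 2 * k ^ 2 := by rw [hc]; push_cast; ring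
  have key : ∀ t : ℤ, (r : ℝ) * ((k : ℝ) * Real.sqrt 3) + (t : ℝ) = 0 → r = 0 ∧ t = 0 := by
    intro t ht
    by_cases hr : r = 0
    · subst hr
      refine ⟨rfl, ?_⟩
      simpa using ht
    · exfalso
      have hr' : (r : ℝ) ≠ 0 := by exact_mod_cast hr
      have hk' : (k : ℝ) ≠ 0 := by exact_mod_cast hk
      apply hirr
      refine ⟨(-t : ℚ) / (r * k), ?_⟩
      push_cast
      rw [div_eq_iff (mul_ne_zero hr' hk')]
      linarith
  have hne : ∀ t : ℤ, (t = s ∨ t = -s) →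
      (r : ℝ) * ((k : ℝ) * Real.sqrt 3) + (t : ℝ) ≠ 0 := by
    intro t hts ht
    obtain ⟨h1, h2⟩ := key t ht
    have hs : s = 0 := by omega
    simp [h1, hs] at hdet
  have n1 := hne s (Or.inl rfl)
  have n2 := hne (-s) (Or.inr rfl)
  push_cast at n2
  have hcf : (c : ℝ) = -(((r : ℝ) * ((k : ℝ) * Real.sqrt 3) + (s : ℝ)) *
      ((r : ℝ) * ((k : ℝ) * Real.sqrt 3) + -(s : ℝ))) := by
    rw [hcR]
    linear_combination (r : ℝ) ^ 2 * k ^ 2 * h3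
  have hc0 : (c : ℝ) ≠ 0 := by
    rw [hcf]
    exact neg_ne_zero.mpr (mul_ne_zero n1 n2)
  have hprod : a ^ 2 - 3 * k ^ 2 = c * d := by
    rw [ha, hc, hd]
    linear_combination (3 * k ^ 2 * (p * s - q * r + 1)) * hdet
  refine ⟨n1, by exact_mod_cast hc0, ?_, hprod, ⟨d, hprod⟩, ?_⟩
  · have hnum : ((p : ℝ) * (k * Real.sqrt 3) + q) * (s - r * (k * Real.sqrt 3)) =
        a + k * Real.sqrt 3 := by
      rw [haR]
      linear_combination (k : ℝ) * Real.sqrt 3 * hdetR - (p : ℝ) * r * k ^ 2 * h3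
    rw [div_eq_div_iff n1 hc0, ← hnum, hcf]
    ring
  · intro h
    rw [div_mul_div_comm] at h
    have hcc : 0 < (c : ℝ) * c := mul_self_pos.mpr hc0
    have h2 := (div_lt_iff₀ hcc).mp h
    rw [zero_mul] at h2
    have h4 : (a : ℝ) ^ 2 < 3 * k ^ 2 := by
      have : ((a : ℝ) + k * Real.sqrt 3) * (a - k * Real.sqrt 3) = a ^ 2 - 3 * k ^ 2 := by
        linear_combination -(k : ℝ) ^ 2 * h3
      linarith
    exact_mod_cast h4
end

section
/- Define the sets of real numbers S₂ = { x ∈ ℝ : there exist integers a, c with c ≠ 0, a² < 12, c divides a² − 12, and x = (a + 2√3)/c } and S₁ = { x ∈ ℝ : there exist integers a, c with c ≠ 0, a² < 3, c divides a² − 3, and x = (a + √3)/c }. Then the set S₂ \ S₁ has exactly 32 elements. -/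
lemma amb_inj {a c a' c' : ℤ} (hc : c ≠ 0) (hc' : c' ≠ 0)
    (h : ((a : ℝ) + 2 * Real.sqrt 3) / (c : ℝ) = ((a' : ℝ) + 2 * Real.sqrt 3) / (c' : ℝ)) :
    a = a' ∧ c = c' := by
  have h1 : (c : ℝ) ≠ 0 := by exact_mod_cast hc
  have h2 : (c' : ℝ) ≠ 0 := by exact_mod_cast hc'
  rw [div_eq_div_iff h1 h2] at h
  have hirr : Irrational (Real.sqrt 3) := by
    have := Nat.Prime.irrational_sqrt (p := 3) (by norm_num)
    simpa using this
  have hcc : c = c' := by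
    by_contra hne
    have hne' : ((c' : ℝ) - c) ≠ 0 := by
      intro h0
      apply hne
      have : (c' : ℝ) = c := by linarith
      exact_mod_cast this.symm
    apply hirr
    refine ⟨((a' * c - a * c' : ℤ) : ℚ) / ((2 * (c' - c) : ℤ) : ℚ), ?_⟩
    push_cast
    rw [div_eq_iff (by simpa using hne')]
    linarith
  subst hcc
  refine ⟨?_, rfl⟩
  have := mul_right_cancel₀ h1 h
  have h3 : (a : ℝ) = a' := by linarith
  exact_mod_cast h3

/-- Index set of the pairs `(a, c)`. -/
noncomputable def ambPairs : Finset (ℤ × ℤ) :=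
  (Finset.Icc (-3) 3 ×ˢ Finset.Icc (-12) 12).filter fun p =>
    p.2 ≠ 0 ∧ p.2 ∣ p.1 ^ 2 - 12 ∧
      ¬ (p.1 % 2 = 0 ∧ p.2 % 2 = 0 ∧ p.2 / 2 ∣ (p.1 / 2) ^ 2 - 3)

lemma ambPairs_card : ambPairs.card = 32 := by decide +kernel

/-- The set `S₂` of ambiguous numbers `(a + 2√3)/c` with integer
d-parameter (`c ≠ 0`, `a² < 12`, `c ∣ a² - 12`), with the set `S₁` of those of
the form `(a + √3)/c` (`c ≠ 0`, `a² < 3`, `c ∣ a² - 3`) removed, has exactly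
32 elements. -/
theorem card_ambiguous_two_sqrt_three :
    ({x : ℝ | ∃ a c : ℤ, c ≠ 0 ∧ a ^ 2 < 12 ∧ c ∣ a ^ 2 - 12 ∧
        x = ((a : ℝ) + 2 * Real.sqrt 3) / (c : ℝ)} \
      {x : ℝ | ∃ a c : ℤ, c ≠ 0 ∧ a ^ 2 < 3 ∧ c ∣ a ^ 2 - 3 ∧
        x = ((a : ℝ) + Real.sqrt 3) / (c : ℝ)}).ncard = 32 := by
  have key : ∀ a c : ℤ, ((a : ℝ) + Real.sqrt 3) / (c : ℝ)
      = (((2 * a : ℤ) : ℝ) + 2 * Real.sqrt 3) / ((2 * c : ℤ) : ℝ) := by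
    intro a c
    push_cast
    rw [← mul_add, mul_div_mul_left _ _ (two_ne_zero)]
  have himg : ({x : ℝ | ∃ a c : ℤ, c ≠ 0 ∧ a ^ 2 < 12 ∧ c ∣ a ^ 2 - 12 ∧
        x = ((a : ℝ) + 2 * Real.sqrt 3) / (c : ℝ)} \
      {x : ℝ | ∃ a c : ℤ, c ≠ 0 ∧ a ^ 2 < 3 ∧ c ∣ a ^ 2 - 3 ∧
        x = ((a : ℝ) + Real.sqrt 3) / (c : ℝ)}) =
      (fun p : ℤ × ℤ => ((p.1 : ℝ) + 2 * Real.sqrt 3) / (p.2 : ℝ)) '' (ambPairs : Set (ℤ × ℤ)) := by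
    ext x
    simp only [Set.mem_sdiff, Set.mem_ofPred_eq, Set.mem_image, Finset.mem_coe, ambPairs,
      Finset.mem_filter, Finset.mem_product, Finset.mem_Icc, Prod.exists]
    constructor
    · rintro ⟨⟨a, c, hc, ha, hd, rfl⟩, hn⟩
      have hd' := Int.le_of_dvd (by linarith) ((dvd_neg).2 hd)
      have hd2 := Int.le_of_dvd (by linarith) ((neg_dvd).2 ((dvd_neg).2 hd))
      have := sq_nonneg a
      refine ⟨a, c, ⟨⟨⟨by nlinarith, by nlinarith⟩, by linarith, by linarith⟩, hc, hd, ?_⟩, rfl⟩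
      rintro ⟨h1, h2, h3⟩
      apply hn
      have e1 : 2 * (a / 2) = a := by omega
      have e2 : 2 * (c / 2) = c := by omega
      refine ⟨a / 2, c / 2, by omega, ?_, h3, ?_⟩
      · have e3 : a ^ 2 = 4 * (a / 2) ^ 2 := by
          conv_lhs => rw [← e1]
          ring
        linarith
      rw [key, e1, e2]
    · rintro ⟨a, c, ⟨⟨⟨ha1, ha2⟩, -, -⟩, hc, hd, hn⟩, rfl⟩
      refine ⟨⟨a, c, hc, by nlinarith, hd, rfl⟩, ?_⟩
      rintro ⟨a', c', hc', ha', hd', h⟩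
      rw [key] at h
      obtain ⟨rfl, rfl⟩ := amb_inj hc (by omega) h
      apply hn
      refine ⟨by omega, by omega, ?_⟩
      rw [Int.mul_ediv_cancel_left _ (by norm_num), Int.mul_ediv_cancel_left _ (by norm_num)]
      exact hd'
  rw [himg, Set.ncard_image_of_injOn, Set.ncard_coe_finset, ambPairs_card]
  rintro ⟨a, c⟩ hp ⟨a', c'⟩ hq h
  have h1 := (Finset.mem_filter.1 (Finset.mem_coe.1 hp)).2.1
  have h2 := (Finset.mem_filter.1 (Finset.mem_coe.1 hq)).2.1
  obtain ⟨rfl, rfl⟩ := amb_inj h1 h2 h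
  rfl
end

section
/- Let a, b, c be integers with c ≠ 0 and b ≠ 0, and let α = (a + b√3)/c, ᾱ = (a − b√3)/c. If α is a negative ambiguous number (α < 0 and ᾱ > 0), then exactly one of the following holds: C(α) > 0 and C(ᾱ) < 0 (so C(α) is ambiguous) and C²(α) < 0 and C²(ᾱ) < 0 (so C²(α) is totally negative), or C²(α) > 0 and C²(ᾱ) < 0 (so C²(α) is ambiguous) and C(α) < 0 and C(ᾱ) < 0 (so C(α) is totally negative). -/
/-- If `α = (a + b√3)/c` is a negative ambiguous number
(`α < 0`, `ᾱ > 0`), then exactly one of the following holds: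
`C(α) > 0, C(ᾱ) < 0` (so `C(α)` is ambiguous) and `C²(α) < 0, C²(ᾱ) < 0`
(so `C²(α)` is totally negative), or `C²(α) > 0, C²(ᾱ) < 0` (so `C²(α)` is
ambiguous) and `C(α) < 0, C(ᾱ) < 0` (so `C(α)` is totally negative), where
`C(z) = -(1+z)/z` and `C²(z) = -1/(1+z)`. -/
theorem negative_ambiguous_C (a b c : ℤ) (hc : c ≠ 0) (hb : b ≠ 0)
    (α αbar : ℝ)
    (hα : α = ((a : ℝ) + (b : ℝ) * Real.sqrt 3) / (c : ℝ))
    (hαbar : αbar = ((a : ℝ) - (b : ℝ) * Real.sqrt 3) / (c : ℝ))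
    (hneg : α < 0) (hpos : 0 < αbar) :
    Xor'
      ((0 < -(1 + α) / α ∧ -(1 + αbar) / αbar < 0) ∧
        (-1 / (1 + α) < 0 ∧ -1 / (1 + αbar) < 0))
      ((0 < -1 / (1 + α) ∧ -1 / (1 + αbar) < 0) ∧
        (-(1 + α) / α < 0 ∧ -(1 + αbar) / αbar < 0)) := by
  have hne : 1 + α ≠ 0 := by
    intro h
    have hcR : (c : ℝ) ≠ 0 := by exact_mod_cast hc
    have hbR : (b : ℝ) ≠ 0 := by exact_mod_cast hb
    have hirr : Irrational (Real.sqrt 3) := by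
      have := Nat.Prime.irrational_sqrt Nat.prime_three
      exact_mod_cast this
    have h1 : α * c = a + b * Real.sqrt 3 := by
      rw [hα]; field_simp
    have h2 : α = -1 := by linarith
    rw [h2] at h1
    apply hirr
    refine ⟨((-c - a : ℤ) : ℚ) / (b : ℚ), ?_⟩
    push_cast
    rw [div_eq_iff hbR]
    linarith
  have h3 : -(1 + αbar) / αbar < 0 := div_neg_of_neg_of_pos (by linarith) hpos
  have h4 : -1 / (1 + αbar) < 0 := div_neg_of_neg_of_pos (by norm_num) (by linarith)
  rcases lt_or_gt_of_ne hne with h | h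
  · have h5 : -(1 + α) / α < 0 := div_neg_of_pos_of_neg (by linarith) hneg
    have h6 : 0 < -1 / (1 + α) := div_pos_of_neg_of_neg (by norm_num) h
    exact Or.inr ⟨⟨⟨h6, h4⟩, h5, h3⟩, fun k => absurd k.1.1 (not_lt.mpr h5.le)⟩
  · have h5 : 0 < -(1 + α) / α := div_pos_of_neg_of_neg (by linarith) hneg
    have h6 : -1 / (1 + α) < 0 := div_neg_of_neg_of_pos (by norm_num) h
    exact Or.inl ⟨⟨⟨h5, h3⟩, h6, h4⟩, fun k => absurd k.1.1 (not_lt.mpr h6.le)⟩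
end

section
/- Let a, b, c be integers with c ≠ 0 and b ≠ 0, and let α = (a + b√3)/c, ᾱ = (a − b√3)/c. If α is a positive ambiguous number (α > 0 and ᾱ < 0), then C(α) < 0, and exactly one of the following holds: C(ᾱ) > 0 (so C(α) is ambiguous) and C²(α) < 0, C²(ᾱ) < 0 (so C²(α) is totally negative), or C(ᾱ) < 0 (so C(α) is totally negative) and C²(α) < 0, C²(ᾱ) > 0 (so C²(α) is ambiguous). -/
/-- If `α = (a + b√3)/c` is a positive ambiguous number
(`α > 0`, `ᾱ < 0`), then `C(α) < 0`, and exactly one of the following holds: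
`C(ᾱ) > 0` (so `C(α)` is ambiguous) and `C²(α) < 0, C²(ᾱ) < 0` (so `C²(α)` is
totally negative), or `C(ᾱ) < 0` (so `C(α)` is totally negative) and
`C²(α) < 0, C²(ᾱ) > 0` (so `C²(α)` is ambiguous), where `C(z) = -(1+z)/z`
and `C²(z) = -1/(1+z)`. -/
theorem positive_ambiguous_C (a b c : ℤ) (hc : c ≠ 0) (hb : b ≠ 0)
    (α αbar : ℝ)
    (hα : α = ((a : ℝ) + (b : ℝ) * Real.sqrt 3) / (c : ℝ))
    (hαbar : αbar = ((a : ℝ) - (b : ℝ) * Real.sqrt 3) / (c : ℝ))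
    (hpos : 0 < α) (hneg : αbar < 0) :
    -(1 + α) / α < 0 ∧
      Xor'
        (0 < -(1 + αbar) / αbar ∧ -1 / (1 + α) < 0 ∧ -1 / (1 + αbar) < 0)
        (-(1 + αbar) / αbar < 0 ∧ -1 / (1 + α) < 0 ∧ 0 < -1 / (1 + αbar)) := by
  have hne : 1 + αbar ≠ 0 := by
    intro h
    have hirr : Irrational (Real.sqrt 3) := by
      have := Nat.Prime.irrational_sqrt (p := 3) (by norm_num)
      exact_mod_cast this
    have hc' : (c : ℝ) ≠ 0 := by exact_mod_cast hc
    have hb' : (b : ℝ) ≠ 0 := by exact_mod_cast hb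
    rw [hαbar] at h
    field_simp at h
    apply hirr
    refine ⟨((a + c : ℤ) : ℚ) / (b : ℚ), ?_⟩
    push_cast
    rw [div_eq_iff hb']
    linarith
  have h1 : -(1 + α) / α < 0 := div_neg_of_neg_of_pos (by linarith) hpos
  have h2 : -1 / (1 + α) < 0 := div_neg_of_neg_of_pos (by norm_num) (by linarith)
  refine ⟨h1, ?_⟩
  rcases lt_or_gt_of_ne hne with h | h
  · have h3 : -(1 + αbar) / αbar < 0 := div_neg_of_pos_of_neg (by linarith) hneg
    have h4 : 0 < -1 / (1 + αbar) := div_pos_of_neg_of_neg (by norm_num) h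
    exact Or.inr ⟨⟨h3, h2, h4⟩, fun h' => lt_asymm h3 h'.1⟩
  · have h3 : 0 < -(1 + αbar) / αbar := div_pos_of_neg_of_neg (by linarith) hneg
    have h4 : -1 / (1 + αbar) < 0 := div_neg_of_neg_of_pos (by norm_num) h
    exact Or.inl ⟨⟨h3, h2, h4⟩, fun h' => lt_asymm h3 h'.1⟩
end

section
/- Let a, b, c be integers with c ≠ 0 and b ≠ 0 such that c divides a² − 3b², and set d = (a² − 3b²)/c. If α = (a + b√3)/c is ambiguous (equivalently a² < 3b²), then each of the four numbers B(α) = (a − b√3)/d, D(α) = (−a + b√3)/d, and whichever of C(α) = (−(a+d) + b√3)/d and C²(α) = (−(a+c) + b√3)/(2a+c+d) is ambiguous, is again of the form (a' + b'√3)/c' with a', c' ∈ ℤ, with the same value b' = ±b of the coefficient of √3 up to sign (b' = b for C(α), C²(α) and D(α), and b' = −b for B(α)), and with integer d-parameter (a'² − 3b²)/c'. -/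
/-- If `α = (a + b√3)/c` is ambiguous with `c ∣ a² - 3b²` and
`d = (a² - 3b²)/c`, then `B(α) = 1/α`, `D(α) = -1/α`, and whichever of
`C(α) = -(1+α)/α` and `C²(α) = -1/(1+α)` is ambiguous, is again of the form
`(a' + b'√3)/c'` with `a', c' ∈ ℤ`, `b' = -b` for `B(α)` and `b' = b` for
`D(α)`, `C(α)`, `C²(α)`, and with integer d-parameter `(a'² - 3b²)/c'`. -/
theorem orbit_form_invariant (a b c : ℤ) (hc : c ≠ 0) (hb : b ≠ 0)
    (hdvd : c ∣ a ^ 2 - 3 * b ^ 2) (d : ℤ) (hd : d = (a ^ 2 - 3 * b ^ 2) / c)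
    (α αbar : ℝ)
    (hα : α = ((a : ℝ) + (b : ℝ) * Real.sqrt 3) / (c : ℝ))
    (hαbar : αbar = ((a : ℝ) - (b : ℝ) * Real.sqrt 3) / (c : ℝ))
    (hamb : α * αbar < 0) :
    (∃ a' c' : ℤ, c' ≠ 0 ∧
      1 / α = ((a' : ℝ) + ((-b : ℤ) : ℝ) * Real.sqrt 3) / (c' : ℝ) ∧
      c' ∣ a' ^ 2 - 3 * b ^ 2) ∧
    (∃ a' c' : ℤ, c' ≠ 0 ∧
      -1 / α = ((a' : ℝ) + (b : ℝ) * Real.sqrt 3) / (c' : ℝ) ∧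
      c' ∣ a' ^ 2 - 3 * b ^ 2) ∧
    ((-(1 + α) / α) * (-(1 + αbar) / αbar) < 0 →
      ∃ a' c' : ℤ, c' ≠ 0 ∧
        -(1 + α) / α = ((a' : ℝ) + (b : ℝ) * Real.sqrt 3) / (c' : ℝ) ∧
        c' ∣ a' ^ 2 - 3 * b ^ 2) ∧
    ((-1 / (1 + α)) * (-1 / (1 + αbar)) < 0 →
      ∃ a' c' : ℤ, c' ≠ 0 ∧
        -1 / (1 + α) = ((a' : ℝ) + (b : ℝ) * Real.sqrt 3) / (c' : ℝ) ∧
        c' ∣ a' ^ 2 - 3 * b ^ 2) := by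
  obtain ⟨e, he⟩ := hdvd
  have hde : d = e := by rw [hd, he, Int.mul_ediv_cancel_left _ hc]
  clear hd
  subst hde
  have hs : Real.sqrt 3 * Real.sqrt 3 = 3 := Real.mul_self_sqrt (by norm_num)
  generalize Real.sqrt 3 = s at *
  have hcR : (c : ℝ) ≠ 0 := by exact_mod_cast hc
  have heR : (a : ℝ) ^ 2 - 3 * (b : ℝ) ^ 2 = c * d := by exact_mod_cast he
  have hα0 : α ≠ 0 := by
    rintro h
    rw [h] at hamb
    simp at hamb
  have hxα : c * α = a + b * s := by rw [hα]; field_simp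
  have hyα : c * αbar = a - b * s := by rw [hαbar]; field_simp
  have hp : α * αbar * c = d := by
    have : (c : ℝ) * (α * αbar * c) = c * d := by
      linear_combination (c * αbar) * hxα + (a + b * s) * hyα + heR - (b : ℝ) ^ 2 * hs
    exact mul_left_cancel₀ hcR this
  have hdR : (d : ℝ) ≠ 0 := by
    rw [← hp]
    exact mul_ne_zero hamb.ne hcR
  have hdZ : d ≠ 0 := by exact_mod_cast hdR
  have hinv : α * (a - b * s) = d := by rw [← hyα, ← hp]; ring
  clear hα hαbar
  refine ⟨⟨a, d, hdZ, ?_, ⟨c, by linarith⟩⟩, ⟨-a, d, hdZ, ?_, ⟨c, by linarith⟩⟩, fun _ =>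
    ⟨-(a + d), d, hdZ, ?_, ⟨2 * a + c + d, by linear_combination he⟩⟩, fun h => ?_⟩
  · rw [div_eq_div_iff hα0 hdR]; push_cast; linear_combination -hinv
  · rw [div_eq_div_iff hα0 hdR]; push_cast; linear_combination hinv
  · rw [div_eq_div_iff hα0 hdR]; push_cast; linear_combination hinv
  · have h1 : 1 + α ≠ 0 := by
      intro h0
      rw [h0] at h
      simp at h
    have h2 : 1 + αbar ≠ 0 := by
      intro h0
      rw [h0] at h
      simp at h
    have hq : (c : ℝ) * ((1 + α) * (1 + αbar)) = 2 * a + c + d := by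
      linear_combination hp + hxα + hyα
    have hqR : ((2 * a + c + d : ℤ) : ℝ) ≠ 0 := by
      push_cast
      rw [← hq]
      exact mul_ne_zero hcR (mul_ne_zero h1 h2)
    refine ⟨-(a + c), 2 * a + c + d, by exact_mod_cast hqR, ?_, ⟨c, by linear_combination he⟩⟩
    rw [div_eq_div_iff h1 hqR]; push_cast
    linear_combination hq - (1 + α) * hyα
end
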